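/- arXiv:1708.03703 — 11 statements merged into one kernel-verified Lean document; each statement's English description precedes it below -/
import Mathlib

section
/- Define c'_i = c_i + ∑_{j:(i,j)∈E}(q²_{ij} − q¹_{ij}) for each i ∈ V and q⁰'_{ij} = q²_{ij} − 2q¹_{ij} + q⁰_{ij} for each (i,j) ∈ E, and let g'(U) = ∑_{i∈U} c'_i + ∑_{(i,j)∈E₀(U)} q⁰'_{ij}. Then for every U ⊆ V, f(U) = g'(U) + ∑_{(i,j)∈E}(2q¹_{ij} − q²_{ij}); consequently U ⊆ V minimizes f over all subsets of V if and only if U minimizes g'. -/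
open Finset

variable {V : Type*} [Fintype V] [DecidableEq V]

/-- Edges of `E` with no endpoint in `U`. -/
def E0 (E : Finset (V × V)) (U : Finset V) : Finset (V × V) :=
  E.filter fun e => e.1 ∉ U ∧ e.2 ∉ U

/-- Edges of `E` with exactly one endpoint in `U`. -/
def E1 (E : Finset (V × V)) (U : Finset V) : Finset (V × V) :=
  E.filter fun e => (e.1 ∈ U ∧ e.2 ∉ U) ∨ (e.1 ∉ U ∧ e.2 ∈ U)

/-- Edges of `E` with both endpoints in `U`. -/
def E2 (E : Finset (V × V)) (U : Finset V) : Finset (V × V) :=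
  E.filter fun e => e.1 ∈ U ∧ e.2 ∈ U

/-- Edges of `E` incident to vertex `i`. -/
def incident (E : Finset (V × V)) (i : V) : Finset (V × V) :=
  E.filter fun e => e.1 = i ∨ e.2 = i

/-- The GVC objective `f`. -/
def gvcObj (E : Finset (V × V)) (c : V → ℝ) (q0 q1 q2 : V × V → ℝ) (U : Finset V) : ℝ :=
  ∑ i ∈ U, c i + ∑ e ∈ E0 E U, q0 e + ∑ e ∈ E1 E U, q1 e + ∑ e ∈ E2 E U, q2 e

/-- reduction of GVC to GVC1. -/
theorem gvc_eq_gvc1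
    (E : Finset (V × V))
    (hsimple : ∀ e ∈ E, e.1 ≠ e.2)
    (honce : ∀ e ∈ E, (e.2, e.1) ∉ E)
    (c : V → ℝ) (q0 q1 q2 : V × V → ℝ)
    (c' : V → ℝ) (hc' : ∀ i, c' i = c i + ∑ e ∈ incident E i, (q2 e - q1 e))
    (q0' : V × V → ℝ) (hq0' : ∀ e ∈ E, q0' e = q2 e - 2 * q1 e + q0 e)
    (g' : Finset V → ℝ)
    (hg' : ∀ U : Finset V, g' U = ∑ i ∈ U, c' i + ∑ e ∈ E0 E U, q0' e) :
    (∀ U : Finset V,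
        gvcObj E c q0 q1 q2 U = g' U + ∑ e ∈ E, (2 * q1 e - q2 e)) ∧
    (∀ U : Finset V,
        (∀ W : Finset V, gvcObj E c q0 q1 q2 U ≤ gvcObj E c q0 q1 q2 W) ↔
          (∀ W : Finset V, g' U ≤ g' W)) := by
  have key : ∀ U : Finset V,
      gvcObj E c q0 q1 q2 U = g' U + ∑ e ∈ E, (2 * q1 e - q2 e) := by
    intro U
    have h1 : ∑ i ∈ U, ∑ e ∈ incident E i, (q2 e - q1 e)
        = ∑ e ∈ E, ((if e.1 ∈ U then (q2 e - q1 e) else 0)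
            + (if e.2 ∈ U then (q2 e - q1 e) else 0)) := by
      simp only [incident, Finset.sum_filter]
      rw [Finset.sum_comm]
      refine Finset.sum_congr rfl fun e he => ?_
      have hne := hsimple e he
      have h2 : ∀ i ∈ U, (if e.1 = i ∨ e.2 = i then (q2 e - q1 e) else 0)
          = (if e.1 = i then (q2 e - q1 e) else 0)
            + (if e.2 = i then (q2 e - q1 e) else 0) := by
        intro i _
        by_cases ha : e.1 = i
        · have hb : e.2 ≠ i := fun hb => hne (ha.trans hb.symm)
          simp [ha, hb]
        · simp [ha]
      rw [Finset.sum_congr rfl h2, Finset.sum_add_distrib, Finset.sum_ite_eq,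
        Finset.sum_ite_eq]
    have h3 : ∑ e ∈ E0 E U, q0 e + ∑ e ∈ E1 E U, q1 e + ∑ e ∈ E2 E U, q2 e
        = ∑ i ∈ U, ∑ e ∈ incident E i, (q2 e - q1 e) + ∑ e ∈ E0 E U, q0' e
          + ∑ e ∈ E, (2 * q1 e - q2 e) := by
      rw [h1]
      simp only [E0, E1, E2, Finset.sum_filter]
      simp only [← Finset.sum_add_distrib]
      refine Finset.sum_congr rfl fun e he => ?_
      rw [hq0' e he]
      by_cases ha : e.1 ∈ U <;> by_cases hb : e.2 ∈ U <;> simp [ha, hb] <;> ring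
    rw [hg']
    simp only [hc', Finset.sum_add_distrib, gvcObj]
    linarith
  refine ⟨key, fun U => ?_⟩
  simp only [key, add_le_add_iff_right]
end

section
/- Let Q be the symmetric V×V real matrix with Q_{ij}=Q_{ji}=(q²_{ij} − 2q¹_{ij} + q⁰_{ij})/2 for every edge (i,j)∈E, Q_{ij}=0 when {i,j} is not an edge, and Q_{ii}=0, and let a_i = c_i + ∑_{j:(i,j)∈E}(q¹_{ij} − q⁰_{ij}). Then for every U ⊆ V, f(U) = ∑_{i∈U} a_i + ∑_{i∈U}∑_{j∈U} Q_{ij} + ∑_{(i,j)∈E} q⁰_{ij}; consequently U minimizes the GVC objective f if and only if U minimizes the UBQP objective ∑_{i∈U} a_i + ∑_{i∈U}∑_{j∈U} Q_{ij}. -/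
open Finset

variable {V : Type*} [Fintype V] [DecidableEq V]

/-- GVC as an unconstrained binary quadratic program. -/
theorem gvc_eq_ubqp
    (E : Finset (V × V))
    (hsimple : ∀ e ∈ E, e.1 ≠ e.2)
    (honce : ∀ e ∈ E, (e.2, e.1) ∉ E)
    (c : V → ℝ) (q0 q1 q2 : V × V → ℝ)
    (Q : V → V → ℝ)
    (hQsym : ∀ i j, Q i j = Q j i)
    (hQedge : ∀ e ∈ E, Q e.1 e.2 = (q2 e - 2 * q1 e + q0 e) / 2)
    (hQzero : ∀ i j, (i, j) ∉ E → (j, i) ∉ E → Q i j = 0)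
    (hQdiag : ∀ i, Q i i = 0)
    (a : V → ℝ) (ha : ∀ i, a i = c i + ∑ e ∈ incident E i, (q1 e - q0 e)) :
    (∀ U : Finset V,
        gvcObj E c q0 q1 q2 U =
          ∑ i ∈ U, a i + ∑ i ∈ U, ∑ j ∈ U, Q i j + ∑ e ∈ E, q0 e) ∧
    (∀ U : Finset V,
        (∀ W : Finset V, gvcObj E c q0 q1 q2 U ≤ gvcObj E c q0 q1 q2 W) ↔
          (∀ W : Finset V,
            (∑ i ∈ U, a i + ∑ i ∈ U, ∑ j ∈ U, Q i j) ≤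
              (∑ i ∈ W, a i + ∑ i ∈ W, ∑ j ∈ W, Q i j))) := by
  have key : ∀ U : Finset V,
        gvcObj E c q0 q1 q2 U =
          ∑ i ∈ U, a i + ∑ i ∈ U, ∑ j ∈ U, Q i j + ∑ e ∈ E, q0 e := by
    intro U
    have h1 : ∑ i ∈ U, a i = ∑ i ∈ U, c i +
        ∑ e ∈ E, ((if e.1 ∈ U then (q1 e - q0 e) else 0) +
          (if e.2 ∈ U then (q1 e - q0 e) else 0)) := by
      simp only [ha, Finset.sum_add_distrib (s := U)]
      congr 1
      simp only [incident, Finset.sum_filter]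
      rw [Finset.sum_comm]
      refine Finset.sum_congr rfl fun e he => ?_
      have hne := hsimple e he
      have : ∀ i ∈ U, (if e.1 = i ∨ e.2 = i then q1 e - q0 e else 0) =
          (if e.1 = i then q1 e - q0 e else 0) + (if e.2 = i then q1 e - q0 e else 0) := by
        intro i _
        by_cases h1 : e.1 = i
        · have h2 : e.2 ≠ i := fun h2 => hne (h1.trans h2.symm)
          simp [h1, h2]
        · simp [h1]
      rw [Finset.sum_congr rfl this, Finset.sum_add_distrib]
      simp only [Finset.sum_ite_eq]
    have hQ : ∀ i j, Q i j =
        (if (i, j) ∈ E then (q2 (i, j) - 2 * q1 (i, j) + q0 (i, j)) / 2 else 0) +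
        (if (j, i) ∈ E then (q2 (j, i) - 2 * q1 (j, i) + q0 (j, i)) / 2 else 0) := by
      intro i j
      by_cases h : (i, j) ∈ E
      · have h' : (j, i) ∉ E := honce _ h
        have := hQedge _ h
        simp only [h, h', if_true, if_false, add_zero]
        exact this
      · by_cases h' : (j, i) ∈ E
        · have := hQedge _ h'
          simp only [h, h', if_true, if_false, zero_add]
          rw [hQsym]
          exact this
        · simp only [h, h', if_false, add_zero]
          exact hQzero i j h h'
    have hw : ∀ w : V × V → ℝ, ∑ i ∈ U, ∑ j ∈ U, (if (i, j) ∈ E then w (i, j) else 0) =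
        ∑ e ∈ E, if e.1 ∈ U ∧ e.2 ∈ U then w e else 0 := by
      intro w
      rw [← Finset.sum_product' U U (fun i j => if (i, j) ∈ E then w (i, j) else 0),
        ← Finset.sum_filter, ← Finset.sum_filter]
      refine Finset.sum_congr ?_ fun _ _ => rfl
      ext e
      simp only [Finset.mem_filter, Finset.mem_product]
      tauto
    have h2 : ∑ i ∈ U, ∑ j ∈ U, Q i j =
        ∑ e ∈ E, if e.1 ∈ U ∧ e.2 ∈ U then (q2 e - 2 * q1 e + q0 e) else 0 := by
      simp only [hQ, Finset.sum_add_distrib]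
      rw [Finset.sum_comm (f := fun i j => if (j, i) ∈ E then
        (q2 (j, i) - 2 * q1 (j, i) + q0 (j, i)) / 2 else 0)]
      rw [hw (fun e => (q2 e - 2 * q1 e + q0 e) / 2), ← Finset.sum_add_distrib]
      refine Finset.sum_congr rfl fun e _ => ?_
      split_ifs <;> ring
    rw [h1, h2, gvcObj, E0, E1, E2, Finset.sum_filter, Finset.sum_filter, Finset.sum_filter]
    simp only [add_assoc]
    congr 1
    simp only [← Finset.sum_add_distrib]
    refine Finset.sum_congr rfl fun e _ => ?_
    by_cases h1 : e.1 ∈ U <;> by_cases h2 : e.2 ∈ U <;> simp [h1, h2] <;> ring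
  refine ⟨key, fun U => ?_⟩
  simp only [key, add_le_add_iff_right]
end

section
/- Let Q be the symmetric V×V real matrix with Q_{ij}=Q_{ji}=q⁰_{ij}/2 for every edge (i,j)∈E, Q_{ij}=0 when {i,j} is not an edge, and Q_{ii}=0, and let a_i = c_i − ∑_{j:(i,j)∈E} q⁰_{ij}. Then for every U ⊆ V, g(U) = ∑_{i∈U} a_i + ∑_{i∈U}∑_{j∈U} Q_{ij} + ∑_{(i,j)∈E} q⁰_{ij}; consequently U minimizes the GVC1 objective g if and only if U minimizes the UBQP objective ∑_{i∈U} a_i + ∑_{i∈U}∑_{j∈U} Q_{ij}. -/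
open Finset

variable {V : Type*} [Fintype V] [DecidableEq V]

/-- GVC1 as an unconstrained binary quadratic program. -/
theorem gvc1_eq_ubqp
    (E : Finset (V × V))
    (hsimple : ∀ e ∈ E, e.1 ≠ e.2)
    (honce : ∀ e ∈ E, (e.2, e.1) ∉ E)
    (c : V → ℝ) (q0 : V × V → ℝ)
    (Q : V → V → ℝ)
    (hQsym : ∀ i j, Q i j = Q j i)
    (hQedge : ∀ e ∈ E, Q e.1 e.2 = q0 e / 2)
    (hQzero : ∀ i j, (i, j) ∉ E → (j, i) ∉ E → Q i j = 0)
    (hQdiag : ∀ i, Q i i = 0)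
    (a : V → ℝ) (ha : ∀ i, a i = c i - ∑ e ∈ incident E i, q0 e)
    (g : Finset V → ℝ)
    (hg : ∀ U : Finset V, g U = ∑ i ∈ U, c i + ∑ e ∈ E0 E U, q0 e) :
    (∀ U : Finset V,
        g U = ∑ i ∈ U, a i + ∑ i ∈ U, ∑ j ∈ U, Q i j + ∑ e ∈ E, q0 e) ∧
    (∀ U : Finset V,
        (∀ W : Finset V, g U ≤ g W) ↔
          (∀ W : Finset V,
            (∑ i ∈ U, a i + ∑ i ∈ U, ∑ j ∈ U, Q i j) ≤
              (∑ i ∈ W, a i + ∑ i ∈ W, ∑ j ∈ W, Q i j))) := by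
  have hI : ∀ U : Finset V, ∑ i ∈ U, ∑ e ∈ incident E i, q0 e
      = ∑ e ∈ E, ((if e.1 ∈ U then q0 e else 0) + (if e.2 ∈ U then q0 e else 0)) := by
    intro U
    simp only [incident, Finset.sum_filter]
    rw [Finset.sum_comm]
    refine Finset.sum_congr rfl fun e he => ?_
    have hne := hsimple e he
    have h1 : ∀ i ∈ U, (if e.1 = i ∨ e.2 = i then q0 e else 0)
        = (if e.1 = i then q0 e else 0) + (if e.2 = i then q0 e else 0) := by
      intro i _
      by_cases h : e.1 = i
      · have h' : e.2 ≠ i := fun h2 => hne (h.trans h2.symm)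
        simp [h, h']
      · simp [h]
    rw [Finset.sum_congr rfl h1, Finset.sum_add_distrib, Finset.sum_ite_eq, Finset.sum_ite_eq]
  have hP : ∀ i j, Q i j = (if (i, j) ∈ E then q0 (i, j) / 2 else 0)
      + (if (j, i) ∈ E then q0 (j, i) / 2 else 0) := by
    intro i j
    by_cases h : (i, j) ∈ E
    · have h' : (j, i) ∉ E := honce _ h
      simpa [h, h'] using hQedge _ h
    · by_cases h' : (j, i) ∈ E
      · rw [hQsym]
        simpa [h, h'] using hQedge _ h'
      · simpa [h, h'] using hQzero i j h h'
  have hQ : ∀ U : Finset V, ∑ i ∈ U, ∑ j ∈ U, Q i j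
      = ∑ e ∈ E, if e.1 ∈ U ∧ e.2 ∈ U then q0 e else 0 := by
    intro U
    have hS : ∑ i ∈ U, ∑ j ∈ U, (if (i, j) ∈ E then q0 (i, j) / 2 else 0)
        = ∑ e ∈ E, if e.1 ∈ U ∧ e.2 ∈ U then q0 e / 2 else 0 := by
      rw [← Finset.sum_product' U U (fun i j => if (i, j) ∈ E then q0 (i, j) / 2 else 0),
        ← Finset.sum_filter, ← Finset.sum_filter]
      refine Finset.sum_congr ?_ fun _ _ => rfl
      ext e
      simp only [Finset.mem_filter, Finset.mem_product]
      tauto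
    simp only [hP, Finset.sum_add_distrib]
    rw [Finset.sum_comm (f := fun i j => if (j, i) ∈ E then q0 (j, i) / 2 else 0), hS,
      ← Finset.sum_add_distrib]
    refine Finset.sum_congr rfl fun e _ => ?_
    split_ifs <;> ring
  have key : ∀ U : Finset V,
      g U = ∑ i ∈ U, a i + ∑ i ∈ U, ∑ j ∈ U, Q i j + ∑ e ∈ E, q0 e := by
    intro U
    have h0 : ∑ e ∈ E0 E U, q0 e
        = -(∑ e ∈ E, ((if e.1 ∈ U then q0 e else 0) + (if e.2 ∈ U then q0 e else 0)))
          + (∑ e ∈ E, if e.1 ∈ U ∧ e.2 ∈ U then q0 e else 0) + ∑ e ∈ E, q0 e := by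
      rw [E0, Finset.sum_filter, ← Finset.sum_neg_distrib, ← Finset.sum_add_distrib,
        ← Finset.sum_add_distrib]
      refine Finset.sum_congr rfl fun e _ => ?_
      by_cases h1 : e.1 ∈ U <;> by_cases h2 : e.2 ∈ U <;> simp [h1, h2]
    simp only [ha, Finset.sum_sub_distrib]
    rw [hg, h0, hI, hQ]
    ring
  refine ⟨key, fun U => forall_congr' fun W => ?_⟩
  rw [key U, key W]
  exact add_le_add_iff_right _
end

section
/- Define the V₁×V₂ real matrix Q by Q_{ij} = q²_{ij} − 2q¹_{ij} + q⁰_{ij} for (i,j)∈E and Q_{ij}=0 otherwise, a_i = c_i + ∑_{j:(i,j)∈E}(q¹_{ij} − q⁰_{ij}) for i∈V₁, and b_j = d_j + ∑_{i:(i,j)∈E}(q¹_{ij} − q⁰_{ij}) for j∈V₂. Then for all U₁ ⊆ V₁ and U₂ ⊆ V₂, f(U₁,U₂) = φ(U₁,U₂) + ∑_{(i,j)∈E} q⁰_{ij}; consequently (U₁,U₂) minimizes the bipartite GVC objective f if and only if it minimizes the BQP01 objective φ. -/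
open Finset

variable {V1 : Type*} {V2 : Type*} [Fintype V1] [Fintype V2] [DecidableEq V1] [DecidableEq V2]

/-- Edges of the bipartite edge set `E` with no endpoint selected. -/
def bE0 (E : Finset (V1 × V2)) (U1 : Finset V1) (U2 : Finset V2) : Finset (V1 × V2) :=
  E.filter fun e => e.1 ∉ U1 ∧ e.2 ∉ U2

/-- Edges of `E` with exactly one endpoint selected. -/
def bE1 (E : Finset (V1 × V2)) (U1 : Finset V1) (U2 : Finset V2) : Finset (V1 × V2) :=
  E.filter fun e => (e.1 ∈ U1 ∧ e.2 ∉ U2) ∨ (e.1 ∉ U1 ∧ e.2 ∈ U2)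

/-- Edges of `E` with both endpoints selected. -/
def bE2 (E : Finset (V1 × V2)) (U1 : Finset V1) (U2 : Finset V2) : Finset (V1 × V2) :=
  E.filter fun e => e.1 ∈ U1 ∧ e.2 ∈ U2

/-- The BQP01 objective with matrix `Q` and linear terms `a`, `b`. -/
def bqpObj (Q : V1 → V2 → ℝ) (a : V1 → ℝ) (b : V2 → ℝ)
    (U1 : Finset V1) (U2 : Finset V2) : ℝ :=
  ∑ i ∈ U1, ∑ j ∈ U2, Q i j + ∑ i ∈ U1, a i + ∑ j ∈ U2, b j

/-- bipartite GVC as a BQP01. -/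
theorem bipartite_gvc_eq_bqp01
    (E : Finset (V1 × V2))
    (c : V1 → ℝ) (d : V2 → ℝ) (q0 q1 q2 : V1 × V2 → ℝ)
    (Q : V1 → V2 → ℝ)
    (hQedge : ∀ e ∈ E, Q e.1 e.2 = q2 e - 2 * q1 e + q0 e)
    (hQzero : ∀ i j, (i, j) ∉ E → Q i j = 0)
    (a : V1 → ℝ)
    (ha : ∀ i, a i = c i + ∑ e ∈ E.filter (fun e => e.1 = i), (q1 e - q0 e))
    (b : V2 → ℝ)
    (hb : ∀ j, b j = d j + ∑ e ∈ E.filter (fun e => e.2 = j), (q1 e - q0 e))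
    (f : Finset V1 → Finset V2 → ℝ)
    (hf : ∀ (U1 : Finset V1) (U2 : Finset V2),
        f U1 U2 = ∑ i ∈ U1, c i + ∑ j ∈ U2, d j + ∑ e ∈ bE0 E U1 U2, q0 e +
          ∑ e ∈ bE1 E U1 U2, q1 e + ∑ e ∈ bE2 E U1 U2, q2 e) :
    (∀ (U1 : Finset V1) (U2 : Finset V2),
        f U1 U2 = bqpObj Q a b U1 U2 + ∑ e ∈ E, q0 e) ∧
    (∀ (U1 : Finset V1) (U2 : Finset V2),
        (∀ (W1 : Finset V1) (W2 : Finset V2), f U1 U2 ≤ f W1 W2) ↔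
          (∀ (W1 : Finset V1) (W2 : Finset V2),
            bqpObj Q a b U1 U2 ≤ bqpObj Q a b W1 W2)) := by
  have key : ∀ (U1 : Finset V1) (U2 : Finset V2),
      f U1 U2 = bqpObj Q a b U1 U2 + ∑ e ∈ E, q0 e := by
    intro U1 U2
    have h1 : ∑ i ∈ U1, a i = ∑ i ∈ U1, c i +
        ∑ e ∈ E, if e.1 ∈ U1 then (q1 e - q0 e) else 0 := by
      simp only [ha, Finset.sum_add_distrib, Finset.sum_filter]
      rw [Finset.sum_comm]
      simp
    have h2 : ∑ j ∈ U2, b j = ∑ j ∈ U2, d j +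
        ∑ e ∈ E, if e.2 ∈ U2 then (q1 e - q0 e) else 0 := by
      simp only [hb, Finset.sum_add_distrib, Finset.sum_filter]
      rw [Finset.sum_comm]
      simp
    have h3 : ∑ i ∈ U1, ∑ j ∈ U2, Q i j =
        ∑ e ∈ E, if e.1 ∈ U1 ∧ e.2 ∈ U2 then (q2 e - 2 * q1 e + q0 e) else 0 := by
      rw [← Finset.sum_product', ← Finset.sum_filter]
      symm
      rw [← Finset.sum_congr rfl
        (fun e he => hQedge e (Finset.mem_filter.mp he).1)]
      apply Finset.sum_subset
      · intro e he
        simp only [Finset.mem_filter] at he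
        exact Finset.mem_product.mpr he.2
      · intro e he hne
        apply hQzero
        intro hE
        exact hne (Finset.mem_filter.mpr ⟨hE, Finset.mem_product.mp he⟩)
    have h4 : ∑ e ∈ bE0 E U1 U2, q0 e + ∑ e ∈ bE1 E U1 U2, q1 e + ∑ e ∈ bE2 E U1 U2, q2 e =
        (∑ e ∈ E, if e.1 ∈ U1 ∧ e.2 ∈ U2 then (q2 e - 2 * q1 e + q0 e) else 0) +
        (∑ e ∈ E, if e.1 ∈ U1 then (q1 e - q0 e) else 0) +
        (∑ e ∈ E, if e.2 ∈ U2 then (q1 e - q0 e) else 0) + ∑ e ∈ E, q0 e := by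
      simp only [bE0, bE1, bE2, Finset.sum_filter, ← Finset.sum_add_distrib]
      apply Finset.sum_congr rfl
      intro e _
      by_cases x : e.1 ∈ U1 <;> by_cases y : e.2 ∈ U2 <;> simp [x, y] <;> ring
    rw [hf, bqpObj, h1, h2, h3]
    linarith
  refine ⟨key, fun U1 U2 => ?_⟩
  simp only [key, add_le_add_iff_right]
end

section
/- Define the V₁×V₂ real matrix Q by Q_{ij} = q⁰_{ij} for (i,j)∈E and Q_{ij}=0 otherwise, a_i = c_i − ∑_{j:(i,j)∈E} q⁰_{ij} for i∈V₁, and b_j = d_j − ∑_{i:(i,j)∈E} q⁰_{ij} for j∈V₂. Then for all U₁ ⊆ V₁ and U₂ ⊆ V₂, g(U₁,U₂) = φ(U₁,U₂) + ∑_{(i,j)∈E} q⁰_{ij}; consequently (U₁,U₂) minimizes the bipartite GVC1 objective g if and only if it minimizes the BQP01 objective φ. -/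
open Finset

variable {V1 : Type*} {V2 : Type*} [Fintype V1] [Fintype V2] [DecidableEq V1] [DecidableEq V2]

/-- bipartite GVC1 as a BQP01. -/
theorem bipartite_gvc1_eq_bqp01
    (E : Finset (V1 × V2))
    (c : V1 → ℝ) (d : V2 → ℝ) (q0 : V1 × V2 → ℝ)
    (Q : V1 → V2 → ℝ)
    (hQedge : ∀ e ∈ E, Q e.1 e.2 = q0 e)
    (hQzero : ∀ i j, (i, j) ∉ E → Q i j = 0)
    (a : V1 → ℝ)
    (ha : ∀ i, a i = c i - ∑ e ∈ E.filter (fun e => e.1 = i), q0 e)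
    (b : V2 → ℝ)
    (hb : ∀ j, b j = d j - ∑ e ∈ E.filter (fun e => e.2 = j), q0 e)
    (g : Finset V1 → Finset V2 → ℝ)
    (hg : ∀ (U1 : Finset V1) (U2 : Finset V2),
        g U1 U2 = ∑ i ∈ U1, c i + ∑ j ∈ U2, d j + ∑ e ∈ bE0 E U1 U2, q0 e) :
    (∀ (U1 : Finset V1) (U2 : Finset V2),
        g U1 U2 = bqpObj Q a b U1 U2 + ∑ e ∈ E, q0 e) ∧
    (∀ (U1 : Finset V1) (U2 : Finset V2),
        (∀ (W1 : Finset V1) (W2 : Finset V2), g U1 U2 ≤ g W1 W2) ↔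
          (∀ (W1 : Finset V1) (W2 : Finset V2),
            bqpObj Q a b U1 U2 ≤ bqpObj Q a b W1 W2)) := by
  have key : ∀ (U1 : Finset V1) (U2 : Finset V2),
      g U1 U2 = bqpObj Q a b U1 U2 + ∑ e ∈ E, q0 e := by
    intro U1 U2
    have h1 : ∑ i ∈ U1, ∑ e ∈ E.filter (fun e => e.1 = i), q0 e
        = ∑ e ∈ E, if e.1 ∈ U1 then q0 e else 0 := by
      simp_rw [Finset.sum_filter]
      rw [Finset.sum_comm]
      simp
    have h2 : ∑ j ∈ U2, ∑ e ∈ E.filter (fun e => e.2 = j), q0 e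
        = ∑ e ∈ E, if e.2 ∈ U2 then q0 e else 0 := by
      simp_rw [Finset.sum_filter]
      rw [Finset.sum_comm]
      simp
    have h3 : ∑ i ∈ U1, ∑ j ∈ U2, Q i j
        = ∑ e ∈ E, if e.1 ∈ U1 ∧ e.2 ∈ U2 then q0 e else 0 := by
      rw [← Finset.sum_product', ← Finset.sum_filter]
      symm
      rw [← Finset.sum_congr rfl
        (fun e he => hQedge e (Finset.mem_filter.mp he).1)]
      apply Finset.sum_subset
      · intro e he
        exact Finset.mem_product.mpr (Finset.mem_filter.mp he).2
      · intro e he hne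
        apply hQzero
        intro hE
        exact hne (Finset.mem_filter.mpr ⟨hE, Finset.mem_product.mp he⟩)
    have h4 : ∑ e ∈ bE0 E U1 U2, q0 e
        = (∑ e ∈ E, if e.1 ∈ U1 ∧ e.2 ∈ U2 then q0 e else 0)
          - (∑ e ∈ E, if e.1 ∈ U1 then q0 e else 0)
          - (∑ e ∈ E, if e.2 ∈ U2 then q0 e else 0) + ∑ e ∈ E, q0 e := by
      unfold bE0
      rw [Finset.sum_filter, ← Finset.sum_sub_distrib, ← Finset.sum_sub_distrib,
        ← Finset.sum_add_distrib]
      apply Finset.sum_congr rfl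
      intro e _
      by_cases p : e.1 ∈ U1 <;> by_cases q : e.2 ∈ U2 <;> simp [p, q]
    rw [hg, h4, bqpObj, h3]
    simp_rw [ha, hb]
    rw [Finset.sum_sub_distrib, Finset.sum_sub_distrib, h1, h2]
    ring
  refine ⟨key, fun U1 U2 => ?_⟩
  simp only [key, add_le_add_iff_right]
end

section
/- For every extreme point (x,y,z) of the GVC-LP feasible region P, the x-component is half-integral, i.e., x_i ∈ {0, 1/2, 1} for every i ∈ V. -/
open Finset

/-- Feasibility for the GVC-LP: `x` is indexed by vertices and `y`, `z` by edges of `E`. -/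
def GVCLPFeasible {V : Type*} (E : Finset (V × V)) (x : V → ℝ)
    (y z : {e : V × V // e ∈ E} → ℝ) : Prop :=
  (∀ i : V, 0 ≤ x i ∧ x i ≤ 1) ∧
  ∀ e : {e : V × V // e ∈ E},
    x e.1.1 + x e.1.2 ≤ 1 + y e ∧
    y e ≤ x e.1.1 ∧
    y e ≤ x e.1.2 ∧
    z e = 1 - x e.1.1 - x e.1.2 + y e ∧
    0 ≤ y e ∧
    0 ≤ z e ∧ z e ≤ 1

open Filter Topology in
lemma gvc_ev (a b : ℝ) (ha : 0 ≤ a) (h : a = 0 → b = 0) :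
    ∀ᶠ ε in 𝓝 (0:ℝ), 0 ≤ a + ε * b := by
  rcases ha.eq_or_lt with h0 | h0
  · have hb := h h0.symm
    simp [hb, ha]
  · have ht : Tendsto (fun ε : ℝ => a + ε * b) (𝓝 0) (𝓝 (a + 0 * b)) :=
      Continuous.tendsto (by fun_prop) 0
    have hp : 0 < a + 0 * b := by simpa using h0
    filter_upwards [ht.eventually (lt_mem_nhds hp)] with ε hε using le_of_lt hε

/-- Perturbation direction. -/
noncomputable def gvcDir (a : ℝ) : ℝ := if a = 0 ∨ a = 1 then 0 else 1 / 2 - a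

lemma gvcDir_zero : gvcDir 0 = 0 := by simp [gvcDir]

lemma gvcDir_one : gvcDir 1 = 0 := by simp [gvcDir]

lemma gvcDir_add (a b : ℝ) (h : a + b = 1) : gvcDir a + gvcDir b = 0 := by
  obtain rfl : b = 1 - a := by linarith
  by_cases h0 : a = 0
  · simp [h0, gvcDir]
  by_cases h1 : a = 1
  · simp [h1, gvcDir]
  have h2 : ¬ (1 - a = 0) := fun h => h1 (by linarith)
  have h3 : ¬ (1 - a = 1) := fun h => h0 (by linarith)
  simp only [gvcDir, h0, h1, h2, h3, or_self, if_false]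
  ring

lemma gvcDir_edge (a b y : ℝ) (h1 : a + b ≤ 1 + y)
    (h2 : y ≤ a) (h3 : y ≤ b) (h4 : 0 ≤ y) (ha : a ≤ 1) (hb : b ≤ 1) :
    ∃ d : ℝ, (1 + y - a - b = 0 → d - gvcDir a - gvcDir b = 0) ∧
      (a - y = 0 → gvcDir a - d = 0) ∧ (b - y = 0 → gvcDir b - d = 0) ∧
      (y = 0 → d = 0) := by
  have z := gvcDir_zero
  have o := gvcDir_one
  by_cases c1 : y = 0
  · refine ⟨0, fun h => ?_, fun h => ?_, fun h => ?_, fun _ => rfl⟩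
    · have := gvcDir_add a b (by linarith)
      linarith
    · obtain rfl : a = 0 := by linarith
      linarith
    · obtain rfl : b = 0 := by linarith
      linarith
  by_cases c2 : a - y = 0
  · refine ⟨gvcDir a, fun h => ?_, fun h => ?_, fun h => ?_, fun h => absurd h c1⟩
    · obtain rfl : b = 1 := by linarith
      linarith
    · ring
    · obtain rfl : b = a := by linarith
      ring
  by_cases c3 : b - y = 0
  · refine ⟨gvcDir b, fun h => ?_, fun h => absurd h c2, fun h => ?_, fun h => absurd h c1⟩
    · obtain rfl : a = 1 := by linarith
      linarith
    · ring
  exact ⟨gvcDir a + gvcDir b, fun h => by ring, fun h => absurd h c2,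
    fun h => absurd h c3, fun h => absurd h c1⟩

open Filter Topology in
lemma gvc_perturb {V : Type*} [Fintype V] (E : Finset (V × V))
    (x : V → ℝ) (y z : {e : V × V // e ∈ E} → ℝ) (hfeas : GVCLPFeasible E x y z) :
    ∃ d : {e : V × V // e ∈ E} → ℝ, ∀ᶠ ε in 𝓝 (0:ℝ),
      GVCLPFeasible E (fun i => x i + ε * gvcDir (x i)) (fun e => y e + ε * d e)
        (fun e => z e + ε * (d e - gvcDir (x e.1.1) - gvcDir (x e.1.2))) := by
  obtain ⟨hx, he⟩ := hfeas
  have key := fun e : {e : V × V // e ∈ E} =>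
    gvcDir_edge (x e.1.1) (x e.1.2) (y e) (he e).1 (he e).2.1 (he e).2.2.1
      (he e).2.2.2.2.1 (hx _).2 (hx _).2
  choose d hd using key
  refine ⟨d, ?_⟩
  have A : ∀ᶠ ε in 𝓝 (0:ℝ), ∀ i, 0 ≤ x i + ε * gvcDir (x i) ∧
      0 ≤ (1 - x i) + ε * (- gvcDir (x i)) := by
    refine eventually_all.2 fun i => (gvc_ev _ _ (hx i).1 fun h => ?_).and
      (gvc_ev _ _ (by linarith [(hx i).2]) fun h => ?_)
    · rw [h, gvcDir_zero]
    · rw [show x i = 1 by linarith, gvcDir_one, neg_zero]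
  have B : ∀ᶠ ε in 𝓝 (0:ℝ), ∀ e : {e : V × V // e ∈ E},
      0 ≤ (1 + y e - x e.1.1 - x e.1.2) + ε * (d e - gvcDir (x e.1.1) - gvcDir (x e.1.2)) ∧
      0 ≤ (x e.1.1 - y e) + ε * (gvcDir (x e.1.1) - d e) ∧
      0 ≤ (x e.1.2 - y e) + ε * (gvcDir (x e.1.2) - d e) ∧
      0 ≤ y e + ε * d e := by
    refine eventually_all.2 fun e => ?_
    obtain ⟨e1, e2, e3, e4, e5, e6⟩ := he e
    obtain ⟨d1, d2, d3, d4⟩ := hd e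
    exact (gvc_ev _ _ (by linarith) d1).and ((gvc_ev _ _ (by linarith) d2).and
      ((gvc_ev _ _ (by linarith) d3).and (gvc_ev _ _ e5 d4)))
  filter_upwards [A, B] with ε hA hB
  refine ⟨fun i => ⟨(hA i).1, by linarith [(hA i).2]⟩, fun e => ?_⟩
  obtain ⟨b1, b2, b3, b4⟩ := hB e
  have a1 := (hA e.1.1).1
  have a2 := (hA e.1.2).1
  have hz := (he e).2.2.2.1
  refine ⟨?_, ?_, ?_, ?_, ?_, ?_, ?_⟩ <;> dsimp only <;> linarith

/-- at every extreme point of the GVC-LP feasible region the `x` part is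
half-integral. -/
theorem gvclp_extreme_point_half_integral
    {V : Type*} [Fintype V] [DecidableEq V]
    (E : Finset (V × V))
    (x : V → ℝ) (y z : {e : V × V // e ∈ E} → ℝ)
    (hfeas : GVCLPFeasible E x y z)
    (hextreme : ∀ (x₁ x₂ : V → ℝ) (y₁ z₁ y₂ z₂ : {e : V × V // e ∈ E} → ℝ) (t : ℝ),
        GVCLPFeasible E x₁ y₁ z₁ → GVCLPFeasible E x₂ y₂ z₂ →
        0 < t → t < 1 →
        x = t • x₁ + (1 - t) • x₂ →
        y = t • y₁ + (1 - t) • y₂ →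
        z = t • z₁ + (1 - t) • z₂ →
        x₁ = x₂ ∧ y₁ = y₂ ∧ z₁ = z₂) :
    ∀ i : V, x i = 0 ∨ x i = 1 / 2 ∨ x i = 1 := by
  obtain ⟨d, hd⟩ := gvc_perturb E x y z hfeas
  have hneg : Filter.Tendsto (fun ε : ℝ => -ε) (nhds 0) (nhds 0) := by
    simpa using (continuous_neg (G := ℝ)).tendsto 0
  have hboth := (hd.and (hneg.eventually hd)).filter_mono
    (nhdsWithin_le_nhds (s := Set.Ioi (0:ℝ)))
  obtain ⟨ε, ⟨hp, hm⟩, hε⟩ := (hboth.and self_mem_nhdsWithin).exists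
  have hε : 0 < ε := hε
  have h := (hextreme _ _ _ _ _ _ (1 / 2) hp hm (by norm_num) (by norm_num)
    (by ext i; simp only [Pi.add_apply, Pi.smul_apply, smul_eq_mul]; ring)
    (by ext i; simp only [Pi.add_apply, Pi.smul_apply, smul_eq_mul]; ring)
    (by ext i; simp only [Pi.add_apply, Pi.smul_apply, smul_eq_mul]; ring)).1
  intro i
  have hi := congrFun h i
  have h0 : ε * gvcDir (x i) = 0 := by linarith
  have h1 : gvcDir (x i) = 0 := (mul_eq_zero.1 h0).resolve_left hε.ne'
  unfold gvcDir at h1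
  split_ifs at h1 with hc
  · rcases hc with hc | hc
    · exact Or.inl hc
    · exact Or.inr (Or.inr hc)
  · exact Or.inr (Or.inl (by linarith))
end

section
/- Assume c_i ≥ 0 for all i∈V, q⁰_{ij}, q¹_{ij}, q²_{ij} ≥ 0, q²_{ij} ≤ α·q¹_{ij} and q¹_{ij} ≤ β·q⁰_{ij} for all (i,j)∈E, where α ≥ 1 and β ≥ 1. Let x̄ ∈ [0,1]^V and set ȳ_{ij} = min(x̄_i, x̄_j) and z̄_{ij} = 1 − x̄_i − x̄_j + ȳ_{ij} for each edge (i,j). Suppose F(x̄,ȳ,z̄) ≤ f(W) for every W ⊆ V (the fractional solution lower-bounds every 0-1 solution). Let U* = { i ∈ V : x̄_i ≥ 1/2 } be the rounded solution. Then f(U*) ≤ max{2, α, αβ} · f(W) for every W ⊆ V; in particular the rounding algorithm produces a max{2, α, αβ}-approximate solution for GVC. -/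
open Finset

variable {V : Type*} [Fintype V] [DecidableEq V]

/-- The fractional GVC-LP objective. -/
def fracObj (E : Finset (V × V)) (c : V → ℝ) (q0 q1 q2 : V × V → ℝ)
    (x : V → ℝ) (y z : V × V → ℝ) : ℝ :=
  ∑ i, c i * x i +
    ∑ e ∈ E, (q2 e * y e + q1 e * (1 - y e - z e) + q0 e * z e)

/-- Threshold indicator. -/
noncomputable def thr (t θ : ℝ) : ℝ := if θ ≤ t then 1 else 0

/-- `φ` is integrable on `[0,1]` with integral `v`. -/
def HasI (φ : ℝ → ℝ) (v : ℝ) : Prop :=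
  IntervalIntegrable φ MeasureTheory.volume 0 1 ∧ ∫ θ in (0:ℝ)..1, φ θ = v

theorem HasI.add {φ ψ : ℝ → ℝ} {a b : ℝ} (h : HasI φ a) (k : HasI ψ b) :
    HasI (fun θ => φ θ + ψ θ) (a + b) :=
  ⟨h.1.add k.1, by rw [intervalIntegral.integral_add h.1 k.1, h.2, k.2]⟩

theorem HasI.sub {φ ψ : ℝ → ℝ} {a b : ℝ} (h : HasI φ a) (k : HasI ψ b) :
    HasI (fun θ => φ θ - ψ θ) (a - b) :=
  ⟨h.1.sub k.1, by rw [intervalIntegral.integral_sub h.1 k.1, h.2, k.2]⟩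

theorem HasI.cmul {φ : ℝ → ℝ} {a : ℝ} (r : ℝ) (h : HasI φ a) :
    HasI (fun θ => r * φ θ) (r * a) :=
  ⟨h.1.const_mul r, by rw [intervalIntegral.integral_const_mul, h.2]⟩

theorem HasI.const (r : ℝ) : HasI (fun _ => r) r :=
  ⟨intervalIntegrable_const, by simp⟩

theorem HasI.sum {ι : Type*} (s : Finset ι) {φ : ι → ℝ → ℝ} {a : ι → ℝ}
    (h : ∀ i ∈ s, HasI (φ i) (a i)) :
    HasI (fun θ => ∑ i ∈ s, φ i θ) (∑ i ∈ s, a i) := by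
  classical
  induction s using Finset.induction_on with
  | empty => simpa using HasI.const 0
  | insert i s hi ih =>
    simp only [Finset.sum_insert hi]
    exact (h i (by simp)).add (ih fun j hj => h j (by simp [hj]))

theorem HasI.thr {t : ℝ} (h0 : 0 ≤ t) (h1 : t ≤ 1) : HasI (thr t) t := by
  constructor
  · apply AntitoneOn.intervalIntegrable
    intro a _ b _ hab
    unfold _root_.thr
    split_ifs <;> first | linarith | norm_num
  · have : _root_.thr t = (Set.Iic t).indicator (fun _ => (1:ℝ)) := by
      ext θ
      simp [_root_.thr, Set.indicator_apply]
    rw [intervalIntegral.integral_of_le zero_le_one, this,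
      MeasureTheory.setIntegral_indicator measurableSet_Iic]
    have h2 : Set.Ioc (0:ℝ) 1 ∩ Set.Iic t = Set.Ioc 0 t := by
      ext θ
      simp only [Set.mem_inter_iff, Set.mem_Ioc, Set.mem_Iic]
      constructor
      · rintro ⟨⟨a, b⟩, d⟩
        exact ⟨a, d⟩
      · rintro ⟨a, d⟩
        exact ⟨⟨a, d.trans h1⟩, d⟩
    rw [h2]
    simp [h0]

theorem gvcObj_thr (E : Finset (V × V)) (c : V → ℝ) (q0 q1 q2 : V × V → ℝ)
    (x : V → ℝ) (θ : ℝ) :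
    gvcObj E c q0 q1 q2 (univ.filter fun i => θ ≤ x i) =
      ∑ i, c i * thr (x i) θ + ∑ e ∈ E, (q2 e * thr (min (x e.1) (x e.2)) θ
        + q1 e * (thr (x e.1) θ + thr (x e.2) θ - 2 * thr (min (x e.1) (x e.2)) θ)
        + q0 e * (1 - thr (x e.1) θ - thr (x e.2) θ + thr (min (x e.1) (x e.2)) θ)) := by
  unfold gvcObj E0 E1 E2
  simp only [Finset.sum_filter, add_assoc, ← Finset.sum_add_distrib]
  congr 1
  · apply Finset.sum_congr rfl
    intro i _
    simp [thr]
  · apply Finset.sum_congr rfl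
    intro e _
    by_cases h1 : θ ≤ x e.1 <;> by_cases h2 : θ ≤ x e.2 <;> simp [thr, h1, h2] <;> norm_num

theorem exists_gap (x : V → ℝ) :
    ∃ m : ℝ, 0 ≤ m ∧ m < 1/2 ∧ ∀ i, x i < 1/2 → x i ≤ m := by
  by_cases hne : (univ.filter fun i => x i < 1/2).Nonempty
  · obtain ⟨j, hj, hmax⟩ := Finset.exists_max_image _ x hne
    refine ⟨max 0 (x j), le_max_left _ _, ?_, ?_⟩
    · exact max_lt (by norm_num) (by simpa using hj)
    · intro i hi
      exact (hmax i (by simpa using hi)).trans (le_max_right _ _)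
  · refine ⟨0, le_rfl, by norm_num, fun i hi => ?_⟩
    exact absurd ⟨i, by simpa using hi⟩ hne

/-- the rounding algorithm is a `max {2, α, αβ}`-approximation for GVC. -/
theorem gvc_rounding_approximation
    (E : Finset (V × V))
    (hsimple : ∀ e ∈ E, e.1 ≠ e.2)
    (honce : ∀ e ∈ E, (e.2, e.1) ∉ E)
    (c : V → ℝ) (q0 q1 q2 : V × V → ℝ)
    (α β : ℝ) (hα : 1 ≤ α) (hβ : 1 ≤ β)
    (hc : ∀ i, 0 ≤ c i)
    (hq0 : ∀ e ∈ E, 0 ≤ q0 e) (hq1 : ∀ e ∈ E, 0 ≤ q1 e) (hq2 : ∀ e ∈ E, 0 ≤ q2 e)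
    (hq2q1 : ∀ e ∈ E, q2 e ≤ α * q1 e)
    (hq1q0 : ∀ e ∈ E, q1 e ≤ β * q0 e)
    (xbar : V → ℝ) (hxbar : ∀ i, 0 ≤ xbar i ∧ xbar i ≤ 1)
    (ybar zbar : V × V → ℝ)
    (hybar : ∀ e : V × V, ybar e = min (xbar e.1) (xbar e.2))
    (hzbar : ∀ e : V × V, zbar e = 1 - xbar e.1 - xbar e.2 + ybar e)
    (hlb : ∀ W : Finset V,
        fracObj E c q0 q1 q2 xbar ybar zbar ≤ gvcObj E c q0 q1 q2 W)
    (Ustar : Finset V)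
    (hUstar : Ustar = univ.filter fun i => 1 / 2 ≤ xbar i) :
    ∀ W : Finset V,
      gvcObj E c q0 q1 q2 Ustar ≤
        max (max 2 α) (α * β) * gvcObj E c q0 q1 q2 W := by
  intro W
  -- `U*` is in fact optimal: the fractional objective is the average of `f` over threshold sets.
  set F := fracObj E c q0 q1 q2 xbar ybar zbar with hF
  let g : ℝ → ℝ := fun θ => gvcObj E c q0 q1 q2 (univ.filter fun i => θ ≤ xbar i)
  have hx : ∀ i, HasI (thr (xbar i)) (xbar i) := fun i => HasI.thr (hxbar i).1 (hxbar i).2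
  have hy : ∀ e : V × V, HasI (thr (min (xbar e.1) (xbar e.2))) (min (xbar e.1) (xbar e.2)) :=
    fun e => HasI.thr (le_min (hxbar _).1 (hxbar _).1) ((min_le_left _ _).trans (hxbar _).2)
  have hg : HasI g F := by
    have key := (HasI.sum univ fun i _ => (hx i).cmul (c i)).add
      (HasI.sum E fun e _ => (((hy e).cmul (q2 e)).add
        ((((hx e.1).add (hx e.2)).sub ((hy e).cmul 2)).cmul (q1 e))).add
        (((((HasI.const 1).sub (hx e.1)).sub (hx e.2)).add (hy e)).cmul (q0 e)))
    convert key using 1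
    · funext θ
      exact gvcObj_thr E c q0 q1 q2 xbar θ
    · rw [hF]
      unfold fracObj
      congr 1
      apply Finset.sum_congr rfl
      intro e _
      rw [hzbar, hybar]
      ring
  obtain ⟨m, hm0, hm1, hm⟩ := exists_gap xbar
  set D := gvcObj E c q0 q1 q2 Ustar with hD
  have hlow : HasI (fun θ => F + (D - F) * (thr (1/2) θ - thr m θ)) (F + (D - F) * (1/2 - m)) :=
    (HasI.const F).add (((HasI.thr (by norm_num) (by norm_num)).sub
      (HasI.thr hm0 (by linarith))).cmul _)
  have hle : F + (D - F) * (1/2 - m) ≤ F := by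
    have := intervalIntegral.integral_mono_on zero_le_one hlow.1 hg.1 (fun θ _ => by
      by_cases h1 : θ ≤ m
      · have h2 : θ ≤ 1/2 := by linarith
        simp only [thr, if_pos h1, if_pos h2]
        have : F ≤ g θ := hlb _
        linarith
      · by_cases h2 : θ ≤ 1/2
        · simp only [thr, if_neg h1, if_pos h2]
          have : g θ = D := by
            rw [hD, hUstar]
            show gvcObj _ _ _ _ _ _ = _
            congr 1
            ext i
            simp only [Finset.mem_filter, Finset.mem_univ, true_and]
            constructor
            · intro h
              by_contra h3
              have := hm i (not_le.mp h3)
              linarith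
            · intro h
              linarith
          linarith
        · simp only [thr, if_neg h1, if_neg h2]
          have : F ≤ g θ := hlb _
          linarith)
    rwa [hlow.2, hg.2] at this
  have hDF : D ≤ F := by
    by_contra h
    nlinarith [mul_pos (sub_pos.mpr (not_le.mp h)) (sub_pos.mpr hm1)]
  have hW : D ≤ gvcObj E c q0 q1 q2 W := hDF.trans (hlb W)
  have hpos : 0 ≤ gvcObj E c q0 q1 q2 W := by
    unfold gvcObj E0 E1 E2
    have a := Finset.sum_nonneg (s := W) fun i _ => hc i
    have b0 := Finset.sum_nonneg (s := E0 E W) fun e he => hq0 e (Finset.mem_filter.mp he).1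
    have b1 := Finset.sum_nonneg (s := E1 E W) fun e he => hq1 e (Finset.mem_filter.mp he).1
    have b2 := Finset.sum_nonneg (s := E2 E W) fun e he => hq2 e (Finset.mem_filter.mp he).1
    unfold E0 at b0
    unfold E1 at b1
    unfold E2 at b2
    linarith
  have hM : (1:ℝ) ≤ max (max 2 α) (α * β) :=
    le_trans (le_trans (by norm_num) (le_max_left 2 α)) (le_max_left _ _)
  nlinarith [mul_nonneg (sub_nonneg.mpr hM) hpos]
end

section
/- Define vertex weights w_i = c_i + ∑_{j:(i,j)∈E}(q²_{ij} − q¹_{ij}) for each i∈V. Then for every vertex cover P of G, f(P) = ∑_{i∈P} w_i + ∑_{(i,j)∈E}(2q¹_{ij} − q²_{ij}); consequently a vertex cover P minimizes the VCPNEW objective f over all vertex covers if and only if P is a minimum weight vertex cover for the weights w. -/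
open Finset

variable {V : Type*} [Fintype V] [DecidableEq V]

/-- `P` is a vertex cover of the graph with edge set `E`. -/
def IsVC (E : Finset (V × V)) (P : Finset V) : Prop :=
  ∀ e ∈ E, e.1 ∈ P ∨ e.2 ∈ P

/-- The VCPNEW objective. -/
def vcObj (E : Finset (V × V)) (c : V → ℝ) (q1 q2 : V × V → ℝ) (P : Finset V) : ℝ :=
  ∑ i ∈ P, c i + ∑ e ∈ E1 E P, q1 e + ∑ e ∈ E2 E P, q2 e
/-- VCPNEW is equivalent to the minimum weight vertex cover problem. -/
theorem vcpnew_eq_mwvcp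
    (E : Finset (V × V))
    (hsimple : ∀ e ∈ E, e.1 ≠ e.2)
    (honce : ∀ e ∈ E, (e.2, e.1) ∉ E)
    (c : V → ℝ) (q1 q2 : V × V → ℝ)
    (w : V → ℝ) (hw : ∀ i, w i = c i + ∑ e ∈ incident E i, (q2 e - q1 e)) :
    (∀ P : Finset V, IsVC E P →
        vcObj E c q1 q2 P = ∑ i ∈ P, w i + ∑ e ∈ E, (2 * q1 e - q2 e)) ∧
    (∀ P : Finset V, IsVC E P →
        ((∀ P' : Finset V, IsVC E P' → vcObj E c q1 q2 P ≤ vcObj E c q1 q2 P') ↔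
          (∀ P' : Finset V, IsVC E P' → ∑ i ∈ P, w i ≤ ∑ i ∈ P', w i))) := by
  have key : ∀ P : Finset V, IsVC E P →
      vcObj E c q1 q2 P = ∑ i ∈ P, w i + ∑ e ∈ E, (2 * q1 e - q2 e) := by
    intro P hP
    have hsw : ∑ i ∈ P, ∑ e ∈ incident E i, (q2 e - q1 e)
        = ∑ e ∈ E, ((if e.1 ∈ P then (q2 e - q1 e) else 0)
          + (if e.2 ∈ P then (q2 e - q1 e) else 0)) := by
      simp only [incident, Finset.sum_filter]
      rw [Finset.sum_comm]
      refine Finset.sum_congr rfl fun e he => ?_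
      have hne := hsimple e he
      rw [← Finset.sum_ite_eq P e.1 (fun _ => q2 e - q1 e),
        ← Finset.sum_ite_eq P e.2 (fun _ => q2 e - q1 e), ← Finset.sum_add_distrib]
      refine Finset.sum_congr rfl fun i _ => ?_
      by_cases h1 : e.1 = i
      · have h2 : e.2 ≠ i := fun h => hne (h1.trans h.symm)
        simp [h1, h2]
      · simp [h1]
    simp only [hw, Finset.sum_add_distrib, hsw, vcObj, E1, E2, Finset.sum_filter]
    rw [add_assoc, add_assoc, ← Finset.sum_add_distrib, ← Finset.sum_add_distrib,
      ← Finset.sum_add_distrib]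
    congr 1
    refine Finset.sum_congr rfl fun e he => ?_
    have := hP e he
    by_cases h1 : e.1 ∈ P <;> by_cases h2 : e.2 ∈ P <;> simp [h1, h2] at this ⊢ <;> ring
  refine ⟨key, fun P hP => forall_congr' fun P' => forall_congr' fun hP' => ?_⟩
  rw [key P hP, key P' hP', add_le_add_iff_right]
end

section
/- Define w_i = c_i + ∑_{j:(i,j)∈E}(q²_{ij} − q¹_{ij}) and φ(P)=∑_{i∈P} w_i. Assume w_i ≥ 0 for all i∈V and K := ∑_{(i,j)∈E}(2q¹_{ij} − q²_{ij}) ≥ 0. Let P° be a vertex cover minimizing φ over all vertex covers, assume φ(P°) > 0, and set δ = K/φ(P°). If P* is a vertex cover with φ(P*) ≤ ε·φ(P°) for some ε ≥ 1, then f(P*) ≤ ((ε + δ)/(1 + δ)) · f(P°), where P° also minimizes f over all vertex covers; i.e., an ε-approximate vertex cover for MWVCP with weights w is an (ε+δ)/(1+δ)-approximate solution for VCPNEW. -/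
open Finset

variable {V : Type*} [Fintype V] [DecidableEq V]

/-- For every vertex cover, `f(P) = φ(P) + K`. -/
theorem vcObj_eq_weight_add_const
    (E : Finset (V × V)) (hsimple : ∀ e ∈ E, e.1 ≠ e.2)
    (c : V → ℝ) (q1 q2 : V × V → ℝ)
    (w : V → ℝ) (hw : ∀ i, w i = c i + ∑ e ∈ incident E i, (q2 e - q1 e))
    (P : Finset V) (hP : IsVC E P) :
    vcObj E c q1 q2 P = ∑ i ∈ P, w i + ∑ e ∈ E, (2 * q1 e - q2 e) := by
  have h1 : ∑ i ∈ P, ∑ e ∈ incident E i, (q2 e - q1 e)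
      = ∑ e ∈ E, ((if e.1 ∈ P then (q2 e - q1 e) else 0)
          + (if e.2 ∈ P then (q2 e - q1 e) else 0)) := by
    simp only [incident, Finset.sum_filter]
    rw [Finset.sum_comm]
    refine Finset.sum_congr rfl fun e he => ?_
    have hne := hsimple e he
    have h2 : ∀ i ∈ P, (if e.1 = i ∨ e.2 = i then q2 e - q1 e else 0)
        = (if e.1 = i then q2 e - q1 e else 0) + (if e.2 = i then q2 e - q1 e else 0) := by
      intro i _
      by_cases ha : e.1 = i <;> by_cases hb : e.2 = i
      · exact absurd (ha.trans hb.symm) hne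
      all_goals simp [ha, hb]
    rw [Finset.sum_congr rfl h2, Finset.sum_add_distrib, Finset.sum_ite_eq, Finset.sum_ite_eq]
  simp only [hw, Finset.sum_add_distrib]
  rw [h1, vcObj, E1, E2, Finset.sum_filter, Finset.sum_filter, add_assoc, add_assoc,
    ← Finset.sum_add_distrib, ← Finset.sum_add_distrib]
  congr 1
  refine Finset.sum_congr rfl fun e he => ?_
  have := hP e he
  by_cases ha : e.1 ∈ P <;> by_cases hb : e.2 ∈ P
  · simp [ha, hb]; ring
  · simp [ha, hb]; ring
  · simp [ha, hb]; ring
  · simp [ha, hb] at this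

/-- an `ε`-approximate vertex cover for the equivalent MWVCP is an
`(ε+δ)/(1+δ)`-approximate solution for VCPNEW. -/
theorem vcpnew_approx_from_mwvcp_approx
    (E : Finset (V × V))
    (hsimple : ∀ e ∈ E, e.1 ≠ e.2)
    (honce : ∀ e ∈ E, (e.2, e.1) ∉ E)
    (c : V → ℝ) (q1 q2 : V × V → ℝ)
    (w : V → ℝ) (hw : ∀ i, w i = c i + ∑ e ∈ incident E i, (q2 e - q1 e))
    (hwnonneg : ∀ i, 0 ≤ w i)
    (K : ℝ) (hK : K = ∑ e ∈ E, (2 * q1 e - q2 e)) (hKnonneg : 0 ≤ K)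
    (P0 : Finset V) (hP0 : IsVC E P0)
    (hP0min : ∀ P : Finset V, IsVC E P → ∑ i ∈ P0, w i ≤ ∑ i ∈ P, w i)
    (hP0pos : 0 < ∑ i ∈ P0, w i)
    (δ : ℝ) (hδ : δ = K / ∑ i ∈ P0, w i)
    (Pstar : Finset V) (hPstar : IsVC E Pstar)
    (ε : ℝ) (hε : 1 ≤ ε)
    (happrox : ∑ i ∈ Pstar, w i ≤ ε * ∑ i ∈ P0, w i) :
    vcObj E c q1 q2 Pstar ≤ (ε + δ) / (1 + δ) * vcObj E c q1 q2 P0 ∧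
    (∀ P : Finset V, IsVC E P → vcObj E c q1 q2 P0 ≤ vcObj E c q1 q2 P) := by
  have key := fun P hP => vcObj_eq_weight_add_const E hsimple c q1 q2 w hw P hP
  refine ⟨?_, fun P hP => ?_⟩
  · rw [key Pstar hPstar, key P0 hP0, ← hK]
    have hS := hP0pos.ne'
    have hKS : K = δ * ∑ i ∈ P0, w i := by rw [hδ]; field_simp
    have hδ0 : 0 ≤ δ := by rw [hδ]; positivity
    have h1 : (1 + δ) ≠ 0 := by positivity
    have : (ε + δ) / (1 + δ) * (∑ i ∈ P0, w i + K) = ε * ∑ i ∈ P0, w i + K := by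
      rw [hKS]; field_simp
    rw [this]
    linarith
  · rw [key P hP, key P0 hP0]
    linarith [hP0min P hP]
end

section
/- Define vertex weights w_i = c_i + ∑_{j:(i,j)∈E}(q¹_{ij} − q⁰_{ij}) for each i∈V. Then for every independent set P of G, f(P) = ∑_{i∈P} w_i + ∑_{(i,j)∈E} q⁰_{ij}; consequently an independent set P maximizes the ISPNEW objective f over all independent sets if and only if P is a maximum weight independent set for the weights w. -/
open Finset

variable {V : Type*} [Fintype V] [DecidableEq V]

/-- `P` is an independent set of the graph with edge set `E`. -/
def IsIndep (E : Finset (V × V)) (P : Finset V) : Prop :=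
  ∀ e ∈ E, ¬(e.1 ∈ P ∧ e.2 ∈ P)

/-- The ISPNEW objective. -/
def isObj (E : Finset (V × V)) (c : V → ℝ) (q0 q1 : V × V → ℝ) (P : Finset V) : ℝ :=
  ∑ i ∈ P, c i + ∑ e ∈ E0 E P, q0 e + ∑ e ∈ E1 E P, q1 e
/-- ISPNEW is equivalent to the maximum weight independent set problem. -/
theorem ispnew_eq_mwisp
    (E : Finset (V × V))
    (hsimple : ∀ e ∈ E, e.1 ≠ e.2)
    (honce : ∀ e ∈ E, (e.2, e.1) ∉ E)
    (c : V → ℝ) (q0 q1 : V × V → ℝ)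
    (w : V → ℝ) (hw : ∀ i, w i = c i + ∑ e ∈ incident E i, (q1 e - q0 e)) :
    (∀ P : Finset V, IsIndep E P →
        isObj E c q0 q1 P = ∑ i ∈ P, w i + ∑ e ∈ E, q0 e) ∧
    (∀ P : Finset V, IsIndep E P →
        ((∀ P' : Finset V, IsIndep E P' → isObj E c q0 q1 P' ≤ isObj E c q0 q1 P) ↔
          (∀ P' : Finset V, IsIndep E P' → ∑ i ∈ P', w i ≤ ∑ i ∈ P, w i))) := by
  have key : ∀ P : Finset V, IsIndep E P →
      isObj E c q0 q1 P = ∑ i ∈ P, w i + ∑ e ∈ E, q0 e := by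
    intro P hP
    have h1 : ∑ i ∈ P, ∑ e ∈ incident E i, (q1 e - q0 e)
        = ∑ e ∈ E, ∑ i ∈ P, if e.1 = i ∨ e.2 = i then (q1 e - q0 e) else 0 := by
      rw [Finset.sum_comm]
      refine Finset.sum_congr rfl fun i _ => ?_
      rw [incident, Finset.sum_filter]
    have h2 : ∀ e ∈ E, (∑ i ∈ P, if e.1 = i ∨ e.2 = i then (q1 e - q0 e) else 0)
        = (if e.1 ∈ P then (q1 e - q0 e) else 0) + (if e.2 ∈ P then (q1 e - q0 e) else 0) := by
      intro e he
      have hne := hsimple e he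
      rw [← Finset.sum_ite_eq P e.1 (fun _ => q1 e - q0 e),
        ← Finset.sum_ite_eq P e.2 (fun _ => q1 e - q0 e), ← Finset.sum_add_distrib]
      refine Finset.sum_congr rfl fun i _ => ?_
      by_cases ha : e.1 = i
      · have hb : e.2 ≠ i := fun hb => hne (ha.trans hb.symm)
        simp [ha, hb]
      · simp [ha]
    rw [Finset.sum_congr rfl h2] at h1
    simp only [hw, Finset.sum_add_distrib]
    rw [h1, isObj, E0, E1, Finset.sum_filter, Finset.sum_filter, add_assoc, add_assoc,
      ← Finset.sum_add_distrib, ← Finset.sum_add_distrib]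
    congr 1
    refine Finset.sum_congr rfl fun e he => ?_
    have hi := hP e he
    by_cases ha : e.1 ∈ P <;> by_cases hb : e.2 ∈ P <;> simp_all
  refine ⟨key, fun P hP => ?_⟩
  refine forall_congr' fun P' => forall_congr' fun hP' => ?_
  rw [key P hP, key P' hP']
  exact add_le_add_iff_right _
end

section
/- Let Ḡ be a subgraph of G with vertex set V(Ḡ) and edge set E(Ḡ), and let k be a real number. If ∑_{i∈V(Ḡ)} x_i ≤ k is a valid inequality for the independent sets of Ḡ (i.e., every independent set S of Ḡ satisfies |S| ≤ k), then for every U ⊆ V, ∑_{i∈U∩V(Ḡ)} 1 − |{(i,j)∈E(Ḡ) : i∈U and j∈U}| ≤ k; that is, ∑_{i∈V(Ḡ)} x_i − ∑_{(i,j)∈E(Ḡ)} y_{ij} ≤ k is a valid inequality for GVC2, where x is the 0-1 incidence vector of U and y_{ij} = x_i·x_j. -/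
open Finset

variable {V : Type*} [Fintype V] [DecidableEq V]

/-- a valid inequality for independent sets of a subgraph lifts to a valid
inequality for GVC2. -/
theorem gvc2_valid_inequality
    (E : Finset (V × V))
    (hsimple : ∀ e ∈ E, e.1 ≠ e.2)
    (honce : ∀ e ∈ E, (e.2, e.1) ∉ E)
    (V' : Finset V) (E' : Finset (V × V))
    (hE'sub : E' ⊆ E)
    (hE'ends : ∀ e ∈ E', e.1 ∈ V' ∧ e.2 ∈ V')
    (k : ℝ)
    (hvalid : ∀ S : Finset V, S ⊆ V' → (∀ e ∈ E', ¬(e.1 ∈ S ∧ e.2 ∈ S)) →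
        (S.card : ℝ) ≤ k) :
    ∀ U : Finset V,
      ((U ∩ V').card : ℝ) -
          (((E'.filter fun e => e.1 ∈ U ∧ e.2 ∈ U).card : ℕ) : ℝ) ≤ k := by
  intro U
  set F := E'.filter fun e => e.1 ∈ U ∧ e.2 ∈ U with hF
  have h := hvalid ((U ∩ V') \ F.image Prod.fst)
    (fun x hx => (Finset.mem_inter.1 (Finset.mem_sdiff.1 hx).1).2) (by
      rintro e he ⟨h1, h2⟩
      rw [Finset.mem_sdiff, Finset.mem_inter] at h1 h2
      exact h1.2 (Finset.mem_image_of_mem _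
        (Finset.mem_filter.2 ⟨he, h1.1.1, h2.1.1⟩)))
  have h3 : (U ∩ V').card ≤ ((U ∩ V') \ F.image Prod.fst).card + F.card := by
    have h4 := Finset.le_card_sdiff (F.image Prod.fst) (U ∩ V')
    have h5 : (F.image Prod.fst).card ≤ F.card := Finset.card_image_le
    omega
  have h6 : ((U ∩ V').card : ℝ) ≤ (((U ∩ V') \ F.image Prod.fst).card : ℝ) + (F.card : ℝ) := by
    exact_mod_cast h3
  linarith
end
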